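/- Let (X, 𝒜, μ) be a measure space, Q ∈ 𝒜 with μ(Q) < ∞, and let p > 2, N ≥ 1, C ≥ 1 be real numbers. Let ε > 0 satisfy C·ε·N^p ≤ 1/5. Let F, G : X → [0,∞) be measurable with ∫_Q F^{p/2} dμ < ∞, and assume that for every t ≥ 1, μ({x ∈ Q : F(x) > N²t}) ≤ Cε ( μ({x ∈ Q : F(x) > t}) + μ({x ∈ Q : G(x) > tε}) ). Then ∫_Q F^{p/2} dμ ≤ ε^{-p/2} ∫_Q G^{p/2} dμ + 2 N^p μ(Q). -/

import Mathlib

/-!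
Put `q = p / 2` and let `ν` be the restriction of `μ` to `Q`. The level-set hypothesis, together
with the trivial bound by `ν univ` when `t < 1`, gives for every `t > 0`
`ν {t < F / N ^ 2} ≤ C ε (ν {t < F} + ν {t < G / ε}) + ν {t < 1}`,
where `{t < 1}` is the superlevel set of the constant function `1`. Each term is a distribution
function, so the layer-cake formula for `q`-th moments (`lintegral_rpow_le_of_meas_lt_le`) turns
this into `∫ (F / N ^ 2) ^ q ≤ C ε (∫ F ^ q + ∫ (G / ε) ^ q) + μ Q`. Rescaling the functions inside
the moments plays the role of a change of variables in `t`, and the constant function `1` takes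
care of the part of the integral below `t = 1`. Multiplying by `N ^ p`, using
`C ε N ^ p ≤ 1 / 5`, and absorbing the finite term `∫ F ^ q / 5` on the left yields the claim.
-/

open MeasureTheory

/-- Layer cake: a linear inequality between distribution functions integrates to the same
inequality between `q`-th moments. -/
lemma lintegral_rpow_le_of_meas_lt_le {X : Type*} [MeasurableSpace X] (ν : Measure X)
    {q : ℝ} (hq : 0 < q) {c : ENNReal} {f g h k : X → ℝ}
    (hf0 : ∀ x, 0 ≤ f x) (hg0 : ∀ x, 0 ≤ g x) (hh0 : ∀ x, 0 ≤ h x) (hk0 : ∀ x, 0 ≤ k x)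
    (hf : Measurable f) (hg : Measurable g) (hh : Measurable h) (hk : Measurable k)
    (hle : ∀ t : ℝ, 0 < t →
      ν {x | t < f x} ≤ c * (ν {x | t < g x} + ν {x | t < h x}) + ν {x | t < k x}) :
    ∫⁻ x, ENNReal.ofReal (f x ^ q) ∂ν ≤
      c * (∫⁻ x, ENNReal.ofReal (g x ^ q) ∂ν + ∫⁻ x, ENNReal.ofReal (h x ^ q) ∂ν) +
        ∫⁻ x, ENNReal.ofReal (k x ^ q) ∂ν := by
  have anti (u : X → ℝ) : Measurable fun t : ℝ => ν {x | t < u x} :=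
    Antitone.measurable fun s t hst => measure_mono fun x hx => lt_of_le_of_lt hst hx
  have hw : Measurable fun t : ℝ => ENNReal.ofReal (t ^ (q - 1)) := by fun_prop
  have mw (u : X → ℝ) : Measurable fun t : ℝ => ν {x | t < u x} * ENNReal.ofReal (t ^ (q - 1)) :=
    (anti u).mul hw
  have mgh : Measurable fun t : ℝ => ν {x | t < g x} * ENNReal.ofReal (t ^ (q - 1)) +
      ν {x | t < h x} * ENNReal.ofReal (t ^ (q - 1)) := (mw g).add (mw h)
  rw [lintegral_rpow_eq_lintegral_meas_lt_mul ν (.of_forall hf0) hf.aemeasurable hq,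
    lintegral_rpow_eq_lintegral_meas_lt_mul ν (.of_forall hg0) hg.aemeasurable hq,
    lintegral_rpow_eq_lintegral_meas_lt_mul ν (.of_forall hh0) hh.aemeasurable hq,
    lintegral_rpow_eq_lintegral_meas_lt_mul ν (.of_forall hk0) hk.aemeasurable hq,
    ← mul_add, mul_left_comm, ← mul_add]
  gcongr
  rw [← lintegral_add_left (mw g), ← lintegral_const_mul _ mgh,
    ← lintegral_add_right _ (mw k)]
  refine setLIntegral_mono' measurableSet_Ioi fun t ht => ?_
  calc _ ≤ (c * (ν {x | t < g x} + ν {x | t < h x}) + ν {x | t < k x}) *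
        ENNReal.ofReal (t ^ (q - 1)) := by gcongr; exact hle t ht
    _ = _ := by ring

lemma lintegral_div_rpow {X : Type*} [MeasurableSpace X] (ν : Measure X) {q b : ℝ} (hb : 0 < b)
    {f : X → ℝ} (hf0 : ∀ x, 0 ≤ f x) :
    ∫⁻ x, ENNReal.ofReal ((f x / b) ^ q) ∂ν =
      ENNReal.ofReal (b ^ (-q)) * ∫⁻ x, ENNReal.ofReal (f x ^ q) ∂ν := by
  rw [← lintegral_const_mul' _ _ ENNReal.ofReal_ne_top]
  refine lintegral_congr fun x => ?_
  rw [← ENNReal.ofReal_mul (by positivity), Real.div_rpow (hf0 x) hb.le, Real.rpow_neg hb.le,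
    div_eq_inv_mul]

/-- Absorption of a finite term; `D` may be infinite. -/
lemma le_add_of_scaled_le {A D M : ENNReal} {a c : ℝ} (ha : 0 < a) (hc : 0 ≤ c)
    (hca : c * a ≤ 1 / 5) (hA : A ≠ ⊤) (hM : M ≠ ⊤)
    (h : ENNReal.ofReal a⁻¹ * A ≤ ENNReal.ofReal c * (A + D) + M) :
    A ≤ D + ENNReal.ofReal (2 * a) * M := by
  by_cases hD : D = ⊤
  · simp [hD]
  lift A to NNReal using hA
  lift D to NNReal using hD
  lift M to NNReal using hM
  have h' : a⁻¹ * (A : ℝ) ≤ c * (A + D) + M := by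
    have := ENNReal.toReal_mono (by finiteness) h
    rw [ENNReal.toReal_add (by finiteness) (by finiteness)] at this
    simpa [ENNReal.toReal_ofReal, hc, ha.le, ENNReal.toReal_add] using this
  have h1 : (A : ℝ) ≤ c * a * (A + D) + a * M := by
    calc (A : ℝ) = a * (a⁻¹ * A) := by field_simp
      _ ≤ a * (c * (A + D) + M) := by gcongr
      _ = _ := by ring
  have h2 : c * a * ((A : ℝ) + D) ≤ 1 / 5 * (A + D) := by gcongr
  have haM : 0 ≤ a * (M : ℝ) := by positivity
  have hD0 : (0 : ℝ) ≤ D := D.2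
  rw [← ENNReal.toReal_le_toReal (by finiteness) (by finiteness),
    ENNReal.toReal_add (by finiteness) (by finiteness)]
  simp only [ENNReal.coe_toReal, ENNReal.toReal_mul,
    ENNReal.toReal_ofReal (show 0 ≤ 2 * a by positivity)]
  linarith

/-- **Abstract good-λ iteration lemma.**
Let `(X, μ)` be a measure space, `Q` measurable with `μ(Q) < ∞`, `p > 2`, `N ≥ 1`, `C ≥ 1`,
and `ε > 0` with `C·ε·N^p ≤ 1/5`.  Let `F, G : X → [0,∞)` be measurable with
`∫_Q F^{p/2} dμ < ∞`, and suppose that for every `t ≥ 1`,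
`μ({x ∈ Q : F(x) > N²t}) ≤ Cε (μ({x ∈ Q : F(x) > t}) + μ({x ∈ Q : G(x) > tε}))`.
Then `∫_Q F^{p/2} dμ ≤ ε^{-p/2} ∫_Q G^{p/2} dμ + 2 N^p μ(Q)`. -/
theorem good_lambda_iteration {X : Type*} [MeasurableSpace X] (μ : Measure X)
    (Q : Set X) (hQ : MeasurableSet Q) (hQfin : μ Q < ⊤)
    (p N C ε : ℝ) (hp : 2 < p) (hN : 1 ≤ N) (hC : 1 ≤ C) (hε : 0 < ε)
    (hsmall : C * ε * N ^ p ≤ 1 / 5)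
    (F G : X → ℝ) (hF0 : ∀ x, 0 ≤ F x) (hG0 : ∀ x, 0 ≤ G x)
    (hFm : Measurable F) (hGm : Measurable G)
    (hFint : ∫⁻ x in Q, ENNReal.ofReal (F x ^ (p / 2)) ∂μ < ⊤)
    (hlevel : ∀ t : ℝ, 1 ≤ t →
      μ {x ∈ Q | N ^ 2 * t < F x} ≤
        ENNReal.ofReal (C * ε) *
          (μ {x ∈ Q | t < F x} + μ {x ∈ Q | t * ε < G x})) :
    ∫⁻ x in Q, ENNReal.ofReal (F x ^ (p / 2)) ∂μ ≤
      ENNReal.ofReal (ε ^ (-(p / 2))) * ∫⁻ x in Q, ENNReal.ofReal (G x ^ (p / 2)) ∂μ +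
        ENNReal.ofReal (2 * N ^ p) * μ Q := by
  have hN0 : 0 < N := by linarith
  have hc0 : 0 ≤ C * ε := by positivity
  have hpow : (N ^ 2 : ℝ) ^ (-(p / 2)) = (N ^ p)⁻¹ := by
    rw [← Real.rpow_natCast, ← Real.rpow_mul hN0.le, ← Real.rpow_neg hN0.le]
    congr 1
    push_cast
    ring
  have hset (f : X → ℝ) (t : ℝ) : μ.restrict Q {x | t < f x} = μ {x ∈ Q | t < f x} := by
    rw [Measure.restrict_apply' hQ, Set.inter_comm]
    rfl
  have key := lintegral_rpow_le_of_meas_lt_le (μ.restrict Q) (q := p / 2) (by linarith)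
    (c := ENNReal.ofReal (C * ε)) (f := fun x => F x / N ^ 2) (g := F) (h := fun x => G x / ε)
    (k := fun _ => 1) (fun x => div_nonneg (hF0 x) (by positivity)) hF0
    (fun x => div_nonneg (hG0 x) hε.le) (fun _ => zero_le_one) (by fun_prop) hFm (by fun_prop)
    measurable_const (fun t ht => ?_)
  · rw [lintegral_div_rpow _ (by positivity) hF0, lintegral_div_rpow _ hε hG0, hpow] at key
    simp only [Real.one_rpow, ENNReal.ofReal_one, lintegral_const, one_mul,
      Measure.restrict_apply_univ] at key
    exact le_add_of_scaled_le (by positivity) hc0 hsmall hFint.ne hQfin.ne key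
  · rcases lt_or_ge t 1 with h1 | h1
    · refine le_add_left (measure_mono fun x _ => h1)
    · refine le_add_right ?_
      simp only [hset, lt_div_iff₀ hε, lt_div_iff₀ (show 0 < N ^ 2 by positivity)]
      simpa only [mul_comm t (N ^ 2)] using hlevel t h1
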